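/- Let P be a finite poset and let X and X' be finite posets containing no chain of three distinct elements x < y < z. If f: X → P and g: X' → P are order-embeddings with conv(Im f) = conv(Im g), then Im f = Im g. -/

import Mathlib

/-- Convex hull of a subset of a poset. -/
def convHull {P : Type} [Preorder P] (S : Set P) : Set P :=
  {x | ∃ y ∈ S, ∃ z ∈ S, y ≤ x ∧ x ≤ z}

/-!
Taking the convex hull of `S` changes neither its minimal nor its maximal elements. In a poset
without chains of three elements, every element is minimal or maximal, so the image of such a
poset under an order embedding consists exactly of the minimal and maximal elements of its hull.
-/

section ConvexHull

variable {P : Type}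

theorem subset_convHull [Preorder P] (S : Set P) : S ⊆ convHull S :=
  fun x hx ↦ ⟨x, hx, x, hx, le_rfl, le_rfl⟩

variable [PartialOrder P] {S T : Set P} {x : P}

theorem minimal_mem_convHull_iff : Minimal (· ∈ convHull S) x ↔ Minimal (· ∈ S) x :=
  minimal_iff_minimal_of_imp_of_forall (subset_convHull S)
    fun _ ⟨y, hy, _, _, hyx, _⟩ ↦ ⟨y, hyx, hy⟩

theorem maximal_mem_convHull_iff : Maximal (· ∈ convHull S) x ↔ Maximal (· ∈ S) x :=
  maximal_iff_maximal_of_imp_of_forall (subset_convHull S)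
    fun _ ⟨_, _, z, hz, _, hxz⟩ ↦ ⟨z, hxz, hz⟩

theorem mem_iff_minimal_or_maximal_mem_convHull
    (hS : ∀ x ∈ S, Minimal (· ∈ S) x ∨ Maximal (· ∈ S) x) :
    x ∈ S ↔ Minimal (· ∈ convHull S) x ∨ Maximal (· ∈ convHull S) x := by
  rw [minimal_mem_convHull_iff, maximal_mem_convHull_iff]
  exact ⟨hS x, fun hx ↦ hx.elim Minimal.prop Maximal.prop⟩

theorem eq_of_convHull_eq
    (hS : ∀ x ∈ S, Minimal (· ∈ S) x ∨ Maximal (· ∈ S) x)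
    (hT : ∀ x ∈ T, Minimal (· ∈ T) x ∨ Maximal (· ∈ T) x)
    (h : convHull S = convHull T) : S = T := by
  ext x
  rw [mem_iff_minimal_or_maximal_mem_convHull hS, h,
    ← mem_iff_minimal_or_maximal_mem_convHull hT]

end ConvexHull

section NoThreeChain

variable {X P : Type*} [Preorder X] [Preorder P]

theorem isMin_or_isMax_of_not_exists_lt_lt (hX : ¬ ∃ x y z : X, x < y ∧ y < z) (x : X) :
    IsMin x ∨ IsMax x := by
  by_contra! hx
  obtain ⟨a, hax⟩ := not_isMin_iff.1 hx.1
  obtain ⟨b, hxb⟩ := not_isMax_iff.1 hx.2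
  exact hX ⟨a, x, b, hax, hxb⟩

theorem minimal_mem_range_iff_isMin (f : X ↪o P) {x : X} :
    Minimal (· ∈ Set.range f) (f x) ↔ IsMin x := by
  simp only [f.minimal_apply_mem_iff subset_rfl, Set.mem_range_self, minimal_true]

theorem maximal_mem_range_iff_isMax (f : X ↪o P) {x : X} :
    Maximal (· ∈ Set.range f) (f x) ↔ IsMax x := by
  simp only [f.maximal_apply_mem_iff subset_rfl, Set.mem_range_self, maximal_true]

theorem minimal_or_maximal_of_mem_range (hX : ¬ ∃ x y z : X, x < y ∧ y < z)
    (f : X ↪o P) :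
    ∀ p ∈ Set.range f, Minimal (· ∈ Set.range f) p ∨ Maximal (· ∈ Set.range f) p := by
  rintro _ ⟨x, rfl⟩
  rw [minimal_mem_range_iff_isMin, maximal_mem_range_iff_isMax]
  exact isMin_or_isMax_of_not_exists_lt_lt hX x

end NoThreeChain

theorem statement_13_general {P : Type} {X X' : Type*} [PartialOrder P] [Preorder X] [Preorder X']
    (hX : ¬ ∃ x y z : X, x < y ∧ y < z) (hX' : ¬ ∃ x y z : X', x < y ∧ y < z)
    (f : X ↪o P) (g : X' ↪o P) (h : convHull (Set.range f) = convHull (Set.range g)) :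
    Set.range f = Set.range g :=
  eq_of_convHull_eq (minimal_or_maximal_of_mem_range hX f) (minimal_or_maximal_of_mem_range hX' g) h

theorem statement_13 (P X X' : Type) [Fintype P] [PartialOrder P]
    [Fintype X] [PartialOrder X] [Fintype X'] [PartialOrder X']
    (hX : ¬ ∃ x y z : X, x < y ∧ y < z) (hX' : ¬ ∃ x y z : X', x < y ∧ y < z)
    (f : X ↪o P) (g : X' ↪o P)
    (h : convHull (Set.range ⇑f) = convHull (Set.range ⇑g)) :
    Set.range ⇑f = Set.range ⇑g :=
  statement_13_general hX hX' f g h
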